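/- arXiv:2403.18559 — 2 statements merged into one kernel-verified Lean document; each statement's English description precedes it below -/
import Mathlib

section
/- There exists a sequence of smooth radial functions (η_k)_{k≥2}, η_k : ℝ² → ℝ, such that for every k: 0 ≤ η_k ≤ 1 on ℝ², η_k ≡ 1 on the open ball of radius 1/k centered at 0, and η_k vanishes outside the closed ball of radius 1/√k centered at 0; moreover, as k → ∞, η_k → 0 pointwise almost everywhere, ‖η_k‖_{L^p(ℝ²)} → 0 for every 1 ≤ p < ∞, and ∫_{ℝ²} ‖∇η_k(x)‖² dx → 0. -/
open MeasureTheory Filter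

/-!
The cut-off is a smooth step in the variable `log ‖x‖`, equal to `1` for `‖x‖ ≤ r` and to `0` for
`R ≤ ‖x‖`. Its gradient lives on the annulus `r ≤ ‖x‖ ≤ R` and is at most `C / (L ‖x‖)` there, with
`L = log (R / r)`. In dimension `n` the function `‖x‖⁻ⁿ` has integral proportional to `L` over the
annulus, so `∫ ‖∇η‖ⁿ` is of order `L / Lⁿ = L⁻⁽ⁿ⁻¹⁾`, which tends to `0` as `R / r → ∞` once
`n ≥ 2`.
-/

section SmoothTransition

lemma deriv_smoothTransition_eq_zero {t : ℝ} (ht : t ∉ Set.Ioo 0 1) :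
    deriv Real.smoothTransition t = 0 := by
  -- Outside `(0, 1)` the function attains its global minimum `0` or its global maximum `1`.
  rcases le_or_gt t 0 with ht₀ | ht₀
  · refine IsLocalMin.deriv_eq_zero (.of_forall fun s => ?_)
    rw [Real.smoothTransition.zero_of_nonpos ht₀]
    exact Real.smoothTransition.nonneg s
  · have ht₁ : 1 ≤ t := not_lt.1 fun h => ht ⟨ht₀, h⟩
    refine IsLocalMax.deriv_eq_zero (.of_forall fun s => ?_)
    rw [Real.smoothTransition.one_of_one_le ht₁]
    exact Real.smoothTransition.le_one s

lemma exists_norm_deriv_smoothTransition_le :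
    ∃ C, ∀ t, ‖deriv Real.smoothTransition t‖ ≤ C := by
  have hcont : Continuous (deriv Real.smoothTransition) :=
    (Real.smoothTransition.contDiff (n := 1)).continuous_deriv le_rfl
  have hsupp : HasCompactSupport (deriv Real.smoothTransition) :=
    .intro isCompact_Icc fun _ ht =>
      deriv_smoothTransition_eq_zero fun h => ht (Set.Ioo_subset_Icc_self h)
  exact hsupp.exists_bound_of_continuous hcont

end SmoothTransition

/-- The radial logarithmic cut-off around the origin with inner radius `r` and outer radius `R`: it
decreases from `1` to `0` as `log ‖x‖` runs from `log r` to `log R`. At `x = 0` the convention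
`log 0 = 0` produces the intended value `1`. -/
noncomputable def logCutoff {E : Type*} [Norm E] (r R : ℝ) (x : E) : ℝ :=
  Real.smoothTransition (1 - Real.log (‖x‖ / r) / Real.log (R / r))

section Pointwise

variable {E : Type*} [NormedAddCommGroup E] {r R : ℝ} {x y : E}

lemma logCutoff_nonneg : 0 ≤ logCutoff r R x :=
  Real.smoothTransition.nonneg _

lemma logCutoff_le_one : logCutoff r R x ≤ 1 :=
  Real.smoothTransition.le_one _

lemma logCutoff_congr_norm (h : ‖x‖ = ‖y‖) : logCutoff r R x = logCutoff r R y := by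
  simp only [logCutoff, h]

lemma logCutoff_eq_one (hr : 0 < r) (hrR : r < R) (hx : ‖x‖ ≤ r) : logCutoff r R x = 1 := by
  apply Real.smoothTransition.one_of_one_le
  have hL : 0 ≤ Real.log (R / r) := Real.log_nonneg ((one_le_div hr).2 hrR.le)
  have hlog : Real.log (‖x‖ / r) ≤ 0 := Real.log_nonpos (by positivity) ((div_le_one hr).2 hx)
  linarith [div_nonpos_of_nonpos_of_nonneg hlog hL]

lemma logCutoff_eq_zero (hr : 0 < r) (hrR : r < R) (hx : R ≤ ‖x‖) : logCutoff r R x = 0 := by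
  apply Real.smoothTransition.zero_of_nonpos
  have hL : 0 < Real.log (R / r) := Real.log_pos ((one_lt_div hr).2 hrR)
  have hR : 0 < R := hr.trans hrR
  have hlog : Real.log (R / r) ≤ Real.log (‖x‖ / r) := by gcongr
  linarith [(one_le_div hL).2 hlog]

lemma fderiv_logCutoff_eq_zero [NormedSpace ℝ E] (hr : 0 < r) (hrR : r < R)
    (hx : ‖x‖ ∉ Set.Ioo r R) : fderiv ℝ (logCutoff r R) x = 0 := by
  rcases le_or_gt ‖x‖ r with hxr | hxr
  · refine IsLocalMax.fderiv_eq_zero (.of_forall fun y => ?_)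
    rw [logCutoff_eq_one hr hrR hxr]
    exact logCutoff_le_one
  · have hxR : R ≤ ‖x‖ := not_lt.1 fun h => hx ⟨hxr, h⟩
    refine IsLocalMin.fderiv_eq_zero (.of_forall fun y => ?_)
    rw [logCutoff_eq_zero hr hrR hxR]
    exact logCutoff_nonneg

end Pointwise

section Smooth

variable {E : Type*} [NormedAddCommGroup E] [InnerProductSpace ℝ E] {r R : ℝ}

lemma contDiff_logCutoff {n : ℕ∞} (hr : 0 < r) (hrR : r < R) :
    ContDiff ℝ n (logCutoff r R : E → ℝ) := by
  refine contDiff_iff_contDiffAt.2 fun x => ?_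
  rcases eq_or_ne x 0 with rfl | hx
  · have heq : (logCutoff r R : E → ℝ) =ᶠ[nhds 0] fun _ => 1 := by
      filter_upwards [Metric.closedBall_mem_nhds _ hr] with y hy
      exact logCutoff_eq_one hr hrR (mem_closedBall_zero_iff.1 hy)
    exact contDiffAt_const.congr_of_eventuallyEq heq
  · have hlog : ContDiffAt ℝ n (fun y : E => Real.log (‖y‖ / r)) x :=
      ((contDiffAt_norm ℝ hx).div_const r).log (div_ne_zero (norm_ne_zero_iff.2 hx) hr.ne')
    exact Real.smoothTransition.contDiffAt.comp x (contDiffAt_const.sub (hlog.div_const _))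

lemma norm_fderiv_logCutoff_le {C : ℝ} (hC : ∀ t, ‖deriv Real.smoothTransition t‖ ≤ C)
    (hr : 0 < r) (hrR : r < R) {x : E} (hx : x ≠ 0) :
    ‖fderiv ℝ (logCutoff r R) x‖ ≤ C / (Real.log (R / r) * ‖x‖) := by
  have hL : 0 < Real.log (R / r) := Real.log_pos ((one_lt_div hr).2 hrR)
  have hx' : 0 < ‖x‖ := norm_pos_iff.2 hx
  set s : ℝ := 1 - Real.log (‖x‖ / r) / Real.log (R / r)
  have hnorm : HasFDerivAt (fun y : E => ‖y‖) (fderiv ℝ (fun y : E => ‖y‖) x) x :=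
    ((contDiffAt_norm ℝ hx (n := 1)).differentiableAt one_ne_zero).hasFDerivAt
  have hprofile : HasDerivAt
      (fun t => Real.smoothTransition (1 - Real.log (t / r) / Real.log (R / r)))
      (deriv Real.smoothTransition s * -(1 / (Real.log (R / r) * ‖x‖))) ‖x‖ := by
    have hstep : HasDerivAt Real.smoothTransition (deriv Real.smoothTransition s) s :=
      ((Real.smoothTransition.contDiff (n := 1)).differentiable one_ne_zero s).hasDerivAt
    have hlog := ((hasDerivAt_id ‖x‖).div_const r).log (div_pos hx' hr).ne'
    have hslope : 1 / (Real.log (R / r) * ‖x‖) = 1 / r / (‖x‖ / r) / Real.log (R / r) := by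
      field_simp
    rw [hslope]
    exact hstep.comp ‖x‖ ((hlog.div_const _).const_sub 1)
  have hfderiv : fderiv ℝ (logCutoff r R) x =
      (deriv Real.smoothTransition s * -(1 / (Real.log (R / r) * ‖x‖))) •
        fderiv ℝ (fun y : E => ‖y‖) x :=
    (hprofile.comp_hasFDerivAt x hnorm).fderiv
  calc ‖fderiv ℝ (logCutoff r R) x‖
      = ‖deriv Real.smoothTransition s‖ * (1 / (Real.log (R / r) * ‖x‖)) *
          ‖fderiv ℝ (fun y : E => ‖y‖) x‖ := by
        rw [hfderiv, norm_smul, norm_mul, norm_neg,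
          Real.norm_of_nonneg (show 0 ≤ 1 / (Real.log (R / r) * ‖x‖) by positivity)]
    _ ≤ C * (1 / (Real.log (R / r) * ‖x‖)) * 1 := by
        have hC₀ : 0 ≤ C := (norm_nonneg _).trans (hC s)
        gcongr
        · exact hC s
        · simpa using norm_fderiv_le_of_lipschitz ℝ (lipschitzWith_one_norm (E := E)) (x₀ := x)
    _ = C / (Real.log (R / r) * ‖x‖) := by ring

end Smooth

section Annulus

variable {E : Type*} [NormedAddCommGroup E]

lemma isCompact_norm_preimage_Icc [ProperSpace E] (r R : ℝ) :
    IsCompact ((‖·‖ : E → ℝ) ⁻¹' Set.Icc r R) :=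
  (isCompact_closedBall (0 : E) R).of_isClosed_subset (isClosed_Icc.preimage continuous_norm)
    fun _ hx => mem_closedBall_zero_iff.2 hx.2

lemma integrableOn_annulus_inv_norm_pow [ProperSpace E] [MeasurableSpace E]
    [OpensMeasurableSpace E] (μ : Measure E) [IsFiniteMeasureOnCompacts μ] {r R : ℝ} (n : ℕ)
    (hr : 0 < r) :
    IntegrableOn (fun x : E => (‖x‖ ^ n)⁻¹) ((‖·‖) ⁻¹' Set.Icc r R) μ := by
  refine ContinuousOn.integrableOn_compact (isCompact_norm_preimage_Icc r R) ?_
  exact (continuous_norm.pow n).continuousOn.inv₀ fun x hx => (pow_pos (hr.trans_le hx.1) n).ne'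

lemma setIntegral_annulus_inv_norm_pow_finrank [NormedSpace ℝ E] [FiniteDimensional ℝ E]
    [Nontrivial E] [MeasurableSpace E] [BorelSpace E] (μ : Measure E) [μ.IsAddHaarMeasure]
    {r R : ℝ} (hr : 0 < r) (hrR : r ≤ R) :
    ∫ x in (‖·‖) ⁻¹' Set.Icc r R, (‖x‖ ^ Module.finrank ℝ E)⁻¹ ∂μ =
      Module.finrank ℝ E * μ.real (Metric.ball 0 1) * Real.log (R / r) := by
  set n := Module.finrank ℝ E
  have hn : n ≠ 0 := Module.finrank_pos.ne'
  have hradial : ∀ t ∈ Set.Icc r R, t ^ (n - 1) * (t ^ n)⁻¹ = t⁻¹ := fun t ht => by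
    have ht₀ : t ≠ 0 := (hr.trans_le ht.1).ne'
    rw [← mul_pow_sub_one hn t]
    field_simp
  have hIcc : Set.Ioi 0 ∩ Set.Icc r R = Set.Icc r R :=
    Set.inter_eq_right.2 fun t ht => hr.trans_le ht.1
  calc ∫ x in (‖·‖) ⁻¹' Set.Icc r R, (‖x‖ ^ n)⁻¹ ∂μ
      = ∫ x, (Set.Icc r R).indicator (fun t => (t ^ n)⁻¹) ‖x‖ ∂μ := by
        rw [← integral_indicator (measurableSet_Icc.preimage measurable_norm)]
        rfl
    _ = n * μ.real (Metric.ball 0 1) * ∫ t in Set.Icc r R, t ^ (n - 1) * (t ^ n)⁻¹ := by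
        rw [← hIcc, ← setIntegral_indicator measurableSet_Icc, hIcc, integral_fun_norm_addHaar]
        simp only [Set.indicator_mul_right, nsmul_eq_mul, smul_eq_mul, mul_assoc, n]
    _ = n * μ.real (Metric.ball 0 1) * Real.log (R / r) := by
        rw [setIntegral_congr_fun measurableSet_Icc hradial, integral_Icc_eq_integral_Ioc,
          ← intervalIntegral.integral_of_le hrR, integral_inv_of_pos hr (hr.trans_le hrR)]

end Annulus

lemma integral_norm_fderiv_logCutoff_pow_finrank_le {E : Type*} [NormedAddCommGroup E]
    [InnerProductSpace ℝ E] [FiniteDimensional ℝ E] [Nontrivial E] [MeasurableSpace E]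
    [BorelSpace E] (μ : Measure E) [μ.IsAddHaarMeasure] {C r R : ℝ}
    (hC : ∀ t, ‖deriv Real.smoothTransition t‖ ≤ C) (hr : 0 < r) (hrR : r < R) :
    ∫ x : E, ‖fderiv ℝ (logCutoff r R) x‖ ^ Module.finrank ℝ E ∂μ ≤
      Module.finrank ℝ E * μ.real (Metric.ball 0 1) * C ^ Module.finrank ℝ E *
        (Real.log (R / r) ^ (Module.finrank ℝ E - 1))⁻¹ := by
  set n := Module.finrank ℝ E
  set L := Real.log (R / r)
  have hL : 0 < L := Real.log_pos ((one_lt_div hr).2 hrR)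
  have hn : n ≠ 0 := Module.finrank_pos.ne'
  set A : Set E := (‖·‖) ⁻¹' Set.Icc r R
  have hA : MeasurableSet A := measurableSet_Icc.preimage measurable_norm
  have hvanish : ∀ x ∉ A, ‖fderiv ℝ (logCutoff r R) x‖ ^ n = 0 := fun x hx => by
    rw [fderiv_logCutoff_eq_zero hr hrR fun h => hx (Set.Ioo_subset_Icc_self h), norm_zero,
      zero_pow hn]
  have hbound : ∀ x ∈ A, ‖fderiv ℝ (logCutoff r R) x‖ ^ n ≤ (C / L) ^ n * (‖x‖ ^ n)⁻¹ :=
    fun x hx => by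
      have hx₀ : x ≠ 0 := norm_pos_iff.1 (hr.trans_le hx.1)
      rw [← inv_pow, ← mul_pow, ← div_eq_mul_inv, div_div]
      exact pow_le_pow_left₀ (norm_nonneg _) (norm_fderiv_logCutoff_le hC hr hrR hx₀) n
  calc ∫ x : E, ‖fderiv ℝ (logCutoff r R) x‖ ^ n ∂μ
      = ∫ x in A, ‖fderiv ℝ (logCutoff r R) x‖ ^ n ∂μ :=
        (setIntegral_eq_integral_of_forall_compl_eq_zero hvanish).symm
    _ ≤ ∫ x in A, (C / L) ^ n * (‖x‖ ^ n)⁻¹ ∂μ :=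
        integral_mono_of_nonneg (.of_forall fun _ => by positivity)
          ((integrableOn_annulus_inv_norm_pow μ n hr).const_mul _)
          (ae_restrict_of_forall_mem hA hbound)
    _ = (C / L) ^ n * (n * μ.real (Metric.ball 0 1) * L) := by
        rw [integral_const_mul, setIntegral_annulus_inv_norm_pow_finrank μ hr hrR.le]
    _ = n * μ.real (Metric.ball 0 1) * C ^ n * (L ^ (n - 1))⁻¹ := by
        rw [div_pow, ← mul_pow_sub_one hn L]
        field_simp

lemma integral_abs_rpow_le_measureReal {α : Type*} [MeasurableSpace α] {μ : Measure α} {f : α → ℝ}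
    {s : Set α} {p : ℝ} (hp : 0 < p) (hμs : μ s ≠ ⊤)
    (hf : ∀ x, |f x| ≤ 1) (hfs : ∀ x ∉ s, f x = 0) : ∫ x, |f x| ^ p ∂μ ≤ μ.real s := by
  have hvanish : ∀ x ∉ s, |f x| ^ p = 0 := fun x hx => by
    rw [hfs x hx, abs_zero, Real.zero_rpow hp.ne']
  calc ∫ x, |f x| ^ p ∂μ = ∫ x in s, |f x| ^ p ∂μ :=
        (setIntegral_eq_integral_of_forall_compl_eq_zero hvanish).symm
    _ ≤ ∫ _ in s, (1 : ℝ) ∂μ :=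
        integral_mono_of_nonneg (.of_forall fun _ => by positivity) (integrableOn_const hμs)
          (.of_forall fun x => Real.rpow_le_one (abs_nonneg _) (hf x) hp.le)
    _ = μ.real s := by simp

section Limits

variable {ι E : Type*} [NormedAddCommGroup E] {l : Filter ι} {r R : ι → ℝ}

lemma tendsto_logCutoff_zero (hr : ∀ᶠ i in l, 0 < r i) (hrR : ∀ᶠ i in l, r i < R i)
    (hR : Tendsto R l (nhds 0)) {x : E} (hx : x ≠ 0) :
    Tendsto (fun i => logCutoff (r i) (R i) x) l (nhds 0) := by
  refine tendsto_const_nhds.congr' ?_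
  filter_upwards [hr, hrR, hR.eventually_lt_const (norm_pos_iff.2 hx)] with i hri hrRi hRi
  exact (logCutoff_eq_zero hri hrRi hRi.le).symm

lemma tendsto_integral_logCutoff_rpow_zero [NormedSpace ℝ E] [FiniteDimensional ℝ E] [Nontrivial E]
    [MeasurableSpace E] [BorelSpace E] (μ : Measure E) [μ.IsAddHaarMeasure]
    (hr : ∀ᶠ i in l, 0 < r i) (hrR : ∀ᶠ i in l, r i < R i) (hR : Tendsto R l (nhds 0))
    {p : ℝ} (hp : 0 < p) :
    Tendsto (fun i => ∫ x : E, |logCutoff (r i) (R i) x| ^ p ∂μ) l (nhds 0) := by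
  have hvolume : Tendsto (fun i => R i ^ Module.finrank ℝ E * μ.real (Metric.ball 0 1)) l
      (nhds 0) := by
    simpa [Module.finrank_pos.ne'] using (hR.pow (Module.finrank ℝ E)).mul_const _
  refine squeeze_zero' (.of_forall fun i => integral_nonneg fun x => by positivity) ?_ hvolume
  filter_upwards [hr, hrR] with i hri hrRi
  rw [← μ.addHaar_real_closedBall 0 (hri.trans hrRi).le]
  refine integral_abs_rpow_le_measureReal hp measure_closedBall_lt_top.ne
    (fun x => ?_) fun x hx => ?_
  · rw [abs_of_nonneg logCutoff_nonneg]
    exact logCutoff_le_one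
  · rw [mem_closedBall_zero_iff, not_le] at hx
    exact logCutoff_eq_zero hri hrRi hx.le

lemma tendsto_integral_norm_fderiv_logCutoff_zero [InnerProductSpace ℝ E] [FiniteDimensional ℝ E]
    [MeasurableSpace E] [BorelSpace E] (μ : Measure E) [μ.IsAddHaarMeasure]
    (hE : 2 ≤ Module.finrank ℝ E) (hr : ∀ᶠ i in l, 0 < r i)
    (hratio : Tendsto (fun i => R i / r i) l atTop) :
    Tendsto (fun i => ∫ x : E, ‖fderiv ℝ (logCutoff (r i) (R i)) x‖ ^ Module.finrank ℝ E ∂μ) l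
      (nhds 0) := by
  have : Nontrivial E := Module.nontrivial_of_finrank_pos (R := ℝ) (by lia)
  obtain ⟨C, hC⟩ := exists_norm_deriv_smoothTransition_le
  have hlog : Tendsto (fun i => Real.log (R i / r i) ^ (Module.finrank ℝ E - 1)) l atTop :=
    (tendsto_pow_atTop (by lia)).comp (Real.tendsto_log_atTop.comp hratio)
  have hbound := hlog.inv_tendsto_atTop.const_mul
    (Module.finrank ℝ E * μ.real (Metric.ball 0 1) * C ^ Module.finrank ℝ E)
  rw [mul_zero] at hbound
  refine squeeze_zero' (.of_forall fun i => integral_nonneg fun x => by positivity) ?_ hbound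
  filter_upwards [hr, hratio.eventually_gt_atTop 1] with i hri hi
  exact integral_norm_fderiv_logCutoff_pow_finrank_le μ hC hri ((one_lt_div hri).1 hi)

end Limits

theorem stmt_0_general {E : Type*} [NormedAddCommGroup E] [InnerProductSpace ℝ E]
    [FiniteDimensional ℝ E] [MeasurableSpace E] [BorelSpace E] (μ : Measure E)
    [μ.IsAddHaarMeasure] (hE : 2 ≤ Module.finrank ℝ E) :
    ∃ η : ℕ → E → ℝ,
      (∀ k, 2 ≤ k →
        ContDiff ℝ (⊤ : ℕ∞) (η k) ∧
        (∀ x y : E, ‖x‖ = ‖y‖ → η k x = η k y) ∧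
        (∀ x, 0 ≤ η k x ∧ η k x ≤ 1) ∧
        (∀ x : E, ‖x‖ < 1 / (k : ℝ) → η k x = 1) ∧
        (∀ x : E, 1 / Real.sqrt (k : ℝ) < ‖x‖ → η k x = 0)) ∧
      (∀ᵐ x ∂μ, Tendsto (fun k => η k x) atTop (nhds 0)) ∧
      (∀ p : ℝ, 0 < p → Tendsto (fun k => ∫ x, |η k x| ^ p ∂μ) atTop (nhds 0)) ∧
      Tendsto (fun k => ∫ x, ‖fderiv ℝ (η k) x‖ ^ Module.finrank ℝ E ∂μ) atTop (nhds 0) := by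
  have : Nontrivial E := Module.nontrivial_of_finrank_pos (R := ℝ) (by lia)
  have hr : ∀ k : ℕ, 2 ≤ k → 0 < 1 / (k : ℝ) := fun k hk => by positivity
  have hrR : ∀ k : ℕ, 2 ≤ k → 1 / (k : ℝ) < 1 / √k := fun k hk =>
    one_div_lt_one_div_of_lt (by positivity) (Real.sqrt_lt_self_iff.2 (by exact_mod_cast hk))
  have hr_ev := (eventually_ge_atTop 2).mono hr
  have hrR_ev := (eventually_ge_atTop 2).mono hrR
  have hsqrt : Tendsto (fun k : ℕ => √(k : ℝ)) atTop atTop :=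
    Real.tendsto_sqrt_atTop.comp tendsto_natCast_atTop_atTop
  have hR : Tendsto (fun k : ℕ => 1 / √(k : ℝ)) atTop (nhds 0) := hsqrt.const_div_atTop 1
  have hratio : Tendsto (fun k : ℕ => 1 / √(k : ℝ) / (1 / (k : ℝ))) atTop atTop := by
    simpa only [one_div, div_inv_eq_mul, inv_mul_eq_div, Real.div_sqrt] using hsqrt
  refine ⟨fun k => logCutoff (1 / k) (1 / √k), fun k hk => ⟨contDiff_logCutoff (hr k hk) (hrR k hk),
    fun x y => logCutoff_congr_norm, fun x => ⟨logCutoff_nonneg, logCutoff_le_one⟩,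
    fun x hx => logCutoff_eq_one (hr k hk) (hrR k hk) hx.le,
    fun x hx => logCutoff_eq_zero (hr k hk) (hrR k hk) hx.le⟩, ?_,
    fun p hp => tendsto_integral_logCutoff_rpow_zero μ hr_ev hrR_ev hR hp,
    tendsto_integral_norm_fderiv_logCutoff_zero μ hE hr_ev hratio⟩
  filter_upwards [μ.ae_ne 0] with x hx using tendsto_logCutoff_zero hr_ev hrR_ev hR hx

/-- There exists a sequence of smooth radial cut-off functions `η_k : ℝ² → ℝ` (for `k ≥ 2`)
with `0 ≤ η_k ≤ 1`, `η_k ≡ 1` on the ball of radius `1/k`, vanishing outside the closed ball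
of radius `1/√k`, such that `η_k → 0` a.e., `‖η_k‖_{L^p} → 0` for every `1 ≤ p < ∞`, and
`∫ ‖∇η_k‖² → 0`. -/
theorem stmt_0 :
    ∃ η : ℕ → EuclideanSpace ℝ (Fin 2) → ℝ,
      (∀ k, 2 ≤ k →
        ContDiff ℝ (⊤ : ℕ∞) (η k) ∧
        (∀ x y : EuclideanSpace ℝ (Fin 2), ‖x‖ = ‖y‖ → η k x = η k y) ∧
        (∀ x, 0 ≤ η k x ∧ η k x ≤ 1) ∧
        (∀ x : EuclideanSpace ℝ (Fin 2), ‖x‖ < 1 / (k : ℝ) → η k x = 1) ∧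
        (∀ x : EuclideanSpace ℝ (Fin 2), 1 / Real.sqrt (k : ℝ) < ‖x‖ → η k x = 0)) ∧
      (∀ᵐ x : EuclideanSpace ℝ (Fin 2), Tendsto (fun k => η k x) atTop (nhds 0)) ∧
      (∀ p : ℝ, 1 ≤ p →
        Tendsto (fun k => ∫ x : EuclideanSpace ℝ (Fin 2), |η k x| ^ p) atTop (nhds 0)) ∧
      Tendsto (fun k => ∫ x : EuclideanSpace ℝ (Fin 2), ‖fderiv ℝ (η k) x‖ ^ 2) atTop
        (nhds 0) := by
  obtain ⟨η, hη, hae, hLp, hgrad⟩ :=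
    stmt_0_general (volume : Measure (EuclideanSpace ℝ (Fin 2))) (by simp)
  exact ⟨η, hη, hae, fun p hp => hLp p (one_pos.trans_le hp), by simpa using hgrad⟩
end

section
/- Let m ≥ 1 and let f : ℝ² → ℝ^m be a C² function that is harmonic, i.e., ∂²f/∂x₁² + ∂²f/∂x₂² = 0 on ℝ², and has finite Dirichlet energy, ∫_{ℝ²} |∇f|² dx < ∞, where |∇f|² = Σ_{i=1}^{2} Σ_{j=1}^{m} (∂_i f_j)². Then f is constant. -/
open MeasureTheory

/-!
The mean value property over balls passes from `f` to its derivative, by differentiation under the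
integral sign. By Hölder's inequality the average of an `L^p` function over a ball `B` is
`O(|B|^(-1/p))`, which tends to `0` as the radius grows. As each value of the derivative is the
average over arbitrarily large balls, a derivative in `L^p` vanishes.

In the plane, the mean value property over balls follows from the one over circles by integration
in polar coordinates, and finite Dirichlet energy says that the derivative is in `L^2`.
-/

section

open Filter InnerProductSpace Laplacian Metric Set
open scoped ENNReal Pointwise Real Topology

section

variable {α F : Type*} [MeasurableSpace α] {μ : Measure α}
  [NormedAddCommGroup F] [NormedSpace ℝ F] {f : α → F} {p : ℝ≥0∞}

lemma enorm_setAverage_le_eLpNorm_mul_rpow (hf : AEStronglyMeasurable f μ) (hp : 1 ≤ p)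
    (s : Set α) :
    ‖⨍ x in s, f x ∂μ‖ₑ ≤ eLpNorm f p μ * μ s ^ (-(1 / p.toReal)) := by
  rcases eq_or_ne (μ s) 0 with h0 | h0
  · simp [setAverage_eq, measureReal_def, h0]
  rcases eq_or_ne (μ s) ∞ with htop | htop
  · simp [setAverage_eq, measureReal_def, htop]
  calc ‖⨍ x in s, f x ∂μ‖ₑ = (μ s)⁻¹ * ‖∫ x in s, f x ∂μ‖ₑ := by
        rw [setAverage_eq, enorm_smul, measureReal_def, ← ENNReal.toReal_inv,
          Real.enorm_of_nonneg ENNReal.toReal_nonneg, ENNReal.ofReal_toReal (by simpa)]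
    _ ≤ (μ s)⁻¹ * eLpNorm f 1 (μ.restrict s) := by
        rw [eLpNorm_one_eq_lintegral_enorm]
        gcongr
        exact enorm_integral_le_lintegral_enorm f
    _ ≤ (μ s)⁻¹ * (eLpNorm f p μ * μ s ^ (1 - 1 / p.toReal)) := by
        gcongr
        refine (eLpNorm_le_eLpNorm_mul_rpow_measure_univ hp hf.restrict).trans ?_
        simp only [Measure.restrict_apply_univ, ENNReal.toReal_one, div_one]
        gcongr
        exact Measure.restrict_le_self
    _ = eLpNorm f p μ * μ s ^ (-(1 / p.toReal)) := by
        rw [mul_left_comm, ← ENNReal.rpow_neg_one, ← ENNReal.rpow_add _ _ h0 htop]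
        ring_nf

lemma tendsto_setAverage_zero_of_memLp {ι : Type*} {l : Filter ι} {s : ι → Set α}
    (hf : MemLp f p μ) (hp : 1 ≤ p) (hp_top : p ≠ ∞)
    (hs : Tendsto (fun i ↦ μ (s i)) l (𝓝 ∞)) :
    Tendsto (fun i ↦ ⨍ x in s i, f x ∂μ) l (𝓝 0) := by
  have exponent_neg : -(1 / p.toReal) < 0 := by
    have := ENNReal.toReal_pos (zero_lt_one.trans_le hp).ne' hp_top
    simpa
  have bound_tendsto :
      Tendsto (fun i ↦ eLpNorm f p μ * μ (s i) ^ (-(1 / p.toReal))) l (𝓝 0) := by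
    have := ENNReal.Tendsto.const_mul (hs.ennrpow_const (-(1 / p.toReal)))
      (Or.inr hf.eLpNorm_ne_top)
    rwa [ENNReal.top_rpow_of_neg exponent_neg, mul_zero] at this
  rw [tendsto_iff_enorm_sub_tendsto_zero]
  simp only [sub_zero]
  exact tendsto_of_tendsto_of_tendsto_of_le_of_le tendsto_const_nhds bound_tendsto
    (fun _ ↦ zero_le) fun i ↦ enorm_setAverage_le_eLpNorm_mul_rpow hf.1 hp (s i)

end

lemma tendsto_measure_closedBall_atTop {X : Type*} [PseudoMetricSpace X] [MeasurableSpace X]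
    (μ : Measure X) (c : X) : Tendsto (fun r ↦ μ (closedBall c r)) atTop (𝓝 (μ univ)) := by
  have iUnion_closedBall : ⋃ r : ℝ, closedBall c r = univ :=
    iUnion_eq_univ_iff.2 fun x ↦ ⟨dist x c, mem_closedBall.2 le_rfl⟩
  rw [← iUnion_closedBall]
  exact tendsto_measure_iUnion_atTop fun _ _ ↦ closedBall_subset_closedBall

/-- The mean value property over closed balls: every value of `f` is its average over each closed
ball of positive radius around that point. The average is the Bochner one, which is `0` when `f` is
not integrable on the ball, the ball has measure `0` or `∞`, or `F` is not complete. -/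
def HasBallMeanValueProperty {X F : Type*} [PseudoMetricSpace X] [MeasurableSpace X]
    [NormedAddCommGroup F] [NormedSpace ℝ F] (μ : Measure X) (f : X → F) : Prop :=
  ∀ c r, 0 < r → ⨍ x in closedBall c r, f x ∂μ = f c

namespace HasBallMeanValueProperty

variable {X Y F : Type*} [PseudoMetricSpace X] [MeasurableSpace X] {μ : Measure X}
  [NormedAddCommGroup F] [NormedSpace ℝ F]

lemma eq_zero_of_memLp {f : X → F} {p : ℝ≥0∞} (hf : HasBallMeanValueProperty μ f)
    (hμ : μ univ = ∞) (hfp : MemLp f p μ) (hp : 1 ≤ p) (hp_top : p ≠ ∞) : f = 0 := by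
  funext c
  have average_tendsto : Tendsto (fun r ↦ ⨍ x in closedBall c r, f x ∂μ) atTop (𝓝 0) :=
    tendsto_setAverage_zero_of_memLp hfp hp hp_top (hμ ▸ tendsto_measure_closedBall_atTop μ c)
  refine tendsto_nhds_unique (tendsto_const_nhds.congr' ?_) average_tendsto
  filter_upwards [eventually_gt_atTop 0] with r hr using (hf c r hr).symm

lemma of_comp_isometryEquiv [BorelSpace X] [PseudoMetricSpace Y] [MeasurableSpace Y] [BorelSpace Y]
    {ν : Measure Y} {f : Y → F} {e : X ≃ᵢ Y} (he : MeasurePreserving e μ ν)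
    (hf : HasBallMeanValueProperty μ (f ∘ e)) : HasBallMeanValueProperty ν f := by
  intro c r hr
  have average_eq : ⨍ x in closedBall (e.symm c) r, (f ∘ e) x ∂μ =
      ⨍ y in closedBall c r, f y ∂ν := by
    rw [← e.apply_symm_apply c, ← e.preimage_closedBall, e.apply_symm_apply]
    have emb := e.toHomeomorph.measurableEmbedding
    simp only [setAverage_eq, Function.comp_apply]
    rw [measureReal_def, he.measure_preimage_emb emb, he.setIntegral_preimage_emb emb,
      measureReal_def]
  rw [← average_eq, hf _ _ hr, Function.comp_apply, e.apply_symm_apply]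

end HasBallMeanValueProperty

section

variable {E F : Type*} [NormedAddCommGroup E] [MeasurableSpace E] [BorelSpace E]
  {μ : Measure E} [NormedAddCommGroup F] [NormedSpace ℝ F]

lemma setAverage_closedBall_eq_setAverage_closedBall_zero [μ.IsAddLeftInvariant] (f : E → F)
    (c : E) (r : ℝ) :
    ⨍ x in closedBall c r, f x ∂μ = ⨍ y in closedBall 0 r, f (c + y) ∂μ := by
  have translate := measurePreserving_add_left μ c
  have emb := (MeasurableEquiv.addLeft c).measurableEmbedding
  have preimage : (c + ·) ⁻¹' closedBall c r = closedBall (0 : E) r := by simp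
  simp only [setAverage_eq, measureReal_def]
  rw [← preimage, translate.measure_preimage_emb emb, translate.setIntegral_preimage_emb emb]

lemma hasFDerivAt_setIntegral_add [NormedSpace ℝ E] [FiniteDimensional ℝ E]
    [IsFiniteMeasureOnCompacts μ] {f : E → F} {K : Set E}
    (hf : ContDiff ℝ 1 f) (hK : IsCompact K) (x₀ : E) :
    HasFDerivAt (fun x ↦ ∫ y in K, f (x + y) ∂μ) (∫ y in K, fderiv ℝ f (x₀ + y) ∂μ) x₀ := by
  have hf' : Continuous (fderiv ℝ f) := hf.continuous_fderiv one_ne_zero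
  have integrableOn_translate (x : E) : IntegrableOn (fun y ↦ f (x + y)) K μ :=
    (hf.continuous.comp (continuous_const_add x)).continuousOn.integrableOn_compact hK
  have integrableOn_fderiv : IntegrableOn (fun y ↦ fderiv ℝ f (x₀ + y)) K μ :=
    (hf'.comp (continuous_const_add x₀)).continuousOn.integrableOn_compact hK
  obtain ⟨C, hC⟩ : ∃ C, ∀ z ∈ closedBall x₀ 1 + K, ‖fderiv ℝ f z‖ ≤ C :=
    ((isCompact_closedBall x₀ 1).add hK).exists_bound_of_continuousOn hf'.continuousOn
  refine hasFDerivAt_integral_of_dominated_of_fderiv_le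
    (closedBall_mem_nhds x₀ one_pos) (bound := fun _ ↦ C) (F' := fun x y ↦ fderiv ℝ f (x + y))
    (.of_forall fun x ↦ (integrableOn_translate x).aestronglyMeasurable)
    (integrableOn_translate x₀) integrableOn_fderiv.aestronglyMeasurable ?_
    (continuousOn_const.integrableOn_compact hK) ?_
  · filter_upwards [ae_restrict_mem hK.measurableSet] with y hy x hx
    exact hC _ (add_mem_add hx hy)
  · exact .of_forall fun y x _ ↦
      (hasFDerivAt_comp_add_right y).2 (hf.differentiable one_ne_zero _).hasFDerivAt

lemma hasBallMeanValueProperty_fderiv [NormedSpace ℝ E] [FiniteDimensional ℝ E]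
    [IsFiniteMeasureOnCompacts μ] [μ.IsAddLeftInvariant] {f : E → F}
    (hf : HasBallMeanValueProperty μ f) (hf_smooth : ContDiff ℝ 1 f) :
    HasBallMeanValueProperty μ (fderiv ℝ f) := by
  intro c r hr
  have f_eq_average : f = fun x ↦
      (μ.real (closedBall (0 : E) r))⁻¹ • ∫ y in closedBall 0 r, f (x + y) ∂μ := by
    funext x
    rw [← setAverage_eq, ← setAverage_closedBall_eq_setAverage_closedBall_zero, hf x r hr]
  have f_deriv := (hasFDerivAt_setIntegral_add hf_smooth (isCompact_closedBall (0 : E) r)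
    (μ := μ) c).const_smul (μ.real (closedBall (0 : E) r))⁻¹
  rw [setAverage_closedBall_eq_setAverage_closedBall_zero, setAverage_eq, ← f_deriv.fderiv]
  exact congrArg (fderiv ℝ · c) f_eq_average.symm

theorem HasBallMeanValueProperty.apply_eq_apply_of_memLp_fderiv [NormedSpace ℝ E]
    [FiniteDimensional ℝ E] [Nontrivial E] [μ.IsAddHaarMeasure] {f : E → F} {p : ℝ≥0∞}
    (hf : HasBallMeanValueProperty μ f) (hf_smooth : ContDiff ℝ 1 f)
    (hfp : MemLp (fderiv ℝ f) p μ) (hp : 1 ≤ p) (hp_top : p ≠ ∞) (x y : E) : f x = f y := by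
  have hμ : μ univ = ∞ := measure_univ_of_isAddLeftInvariant μ
  have fderiv_eq_zero : fderiv ℝ f = 0 :=
    (hasBallMeanValueProperty_fderiv hf hf_smooth).eq_zero_of_memLp hμ hfp hp hp_top
  exact is_const_of_fderiv_eq_zero (hf_smooth.differentiable one_ne_zero)
    (congrFun fderiv_eq_zero) x y

end

lemma polarCoord_symm_eq_circleMap (r θ : ℝ) :
    Complex.polarCoord.symm (r, θ) = circleMap 0 r θ := by
  simp [circleMap, Complex.exp_mul_I]

section

variable {F : Type*} [NormedAddCommGroup F] [NormedSpace ℝ F]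

lemma integral_Ioo_circleMap_eq_circleAverage (f : ℂ → F) (c : ℂ) (r : ℝ) :
    ∫ θ in Ioo (-π) π, f (circleMap c r θ) = (2 * π) • Real.circleAverage f c r := by
  have shift : ∫ θ in (0 : ℝ)..2 * π, f (circleMap c r (θ + -π)) =
      ∫ θ in (-π)..π, f (circleMap c r θ) := by
    rw [intervalIntegral.integral_comp_add_right fun θ ↦ f (circleMap c r θ)]
    ring_nf
  rw [Real.circleAverage_eq_integral_add (-π), smul_inv_smul₀ Real.two_pi_pos.ne', shift,
    intervalIntegral.integral_of_le (by linarith [Real.pi_pos]), integral_Ioc_eq_integral_Ioo]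

lemma setIntegral_closedBall_eq_setIntegral_circleMap (f : ℂ → F) (c : ℂ) (R : ℝ) :
    ∫ z in closedBall c R, f z =
      ∫ q in Ioc 0 R ×ˢ Ioo (-π) π, q.1 • f (circleMap c q.1 q.2) := by
  have polar_mem_iff {q : ℝ × ℝ} (hq : q ∈ polarCoord.target) :
      c + Complex.polarCoord.symm q ∈ closedBall c R ↔ q ∈ Ioc 0 R ×ˢ Ioo (-π) π := by
    have hq1 : 0 < q.1 := hq.1
    have hq2 : q.2 ∈ Ioo (-π) π := hq.2
    rw [mem_closedBall, dist_self_add_left, Complex.norm_polarCoord_symm, abs_of_pos hq1]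
    simp only [mem_prod, mem_Ioc, hq1, hq2, true_and, and_true]
  have region_subset : Ioc 0 R ×ˢ Ioo (-π) π ⊆ polarCoord.target :=
    prod_mono_left Ioc_subset_Ioi_self
  calc ∫ z in closedBall c R, f z
      = ∫ z, (closedBall c R).indicator f (c + z) := by
        rw [integral_add_left_eq_self (fun z ↦ (closedBall c R).indicator f z),
          integral_indicator measurableSet_closedBall]
    _ = ∫ q in polarCoord.target,
          q.1 • (closedBall c R).indicator f (c + Complex.polarCoord.symm q) :=
        (Complex.integral_comp_polarCoord_symm _).symm
    _ = ∫ q in polarCoord.target,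
          (Ioc 0 R ×ˢ Ioo (-π) π).indicator (fun q ↦ q.1 • f (circleMap c q.1 q.2)) q := by
        refine setIntegral_congr_fun polarCoord.open_target.measurableSet fun q hq ↦ ?_
        by_cases hq_mem : q ∈ Ioc 0 R ×ˢ Ioo (-π) π
        · rw [indicator_of_mem ((polar_mem_iff hq).2 hq_mem), indicator_of_mem hq_mem,
            polarCoord_symm_eq_circleMap, circleMap, circleMap, zero_add]
        · rw [indicator_of_notMem (mt (polar_mem_iff hq).1 hq_mem), indicator_of_notMem hq_mem,
            smul_zero]
    _ = ∫ q in Ioc 0 R ×ˢ Ioo (-π) π, q.1 • f (circleMap c q.1 q.2) := by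
        rw [setIntegral_indicator (measurableSet_Ioc.prod measurableSet_Ioo),
          inter_eq_right.2 region_subset]

lemma setIntegral_closedBall_eq_integral_circleAverage {f : ℂ → F} {c : ℂ} {R : ℝ}
    (hf : ContinuousOn f (closedBall c R)) :
    ∫ z in closedBall c R, f z = ∫ r in Ioc 0 R, (2 * π * r) • Real.circleAverage f c r := by
  have integrableOn_polar : IntegrableOn (fun q : ℝ × ℝ ↦ q.1 • f (circleMap c q.1 q.2))
      (Ioc 0 R ×ˢ Ioo (-π) π) := by
    have circleMap_mapsTo : MapsTo (fun q : ℝ × ℝ ↦ circleMap c q.1 q.2)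
        (Icc 0 R ×ˢ Icc (-π) π) (closedBall c R) := fun q hq ↦
      closedBall_subset_closedBall hq.1.2 (circleMap_mem_closedBall c hq.1.1 q.2)
    have circleMap_continuous : Continuous fun q : ℝ × ℝ ↦ circleMap c q.1 q.2 := by
      unfold circleMap; fun_prop
    exact (continuousOn_fst.smul (hf.comp circleMap_continuous.continuousOn circleMap_mapsTo)
      |>.integrableOn_compact (isCompact_Icc.prod isCompact_Icc)).mono_set
      (prod_mono Ioc_subset_Icc_self Ioo_subset_Icc_self)
  rw [setIntegral_closedBall_eq_setIntegral_circleMap, Measure.volume_eq_prod,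
    setIntegral_prod _ integrableOn_polar]
  refine setIntegral_congr_fun measurableSet_Ioc fun r _ ↦ ?_
  simp only [integral_smul, integral_Ioo_circleMap_eq_circleAverage, smul_smul, mul_comm r]

lemma setAverage_closedBall_eq_of_circleAverage_eq [CompleteSpace F] {f : ℂ → F} {c : ℂ} {R : ℝ}
    (hR : 0 < R) (hf : ContinuousOn f (closedBall c R))
    (hf_circle : ∀ r ∈ Ioc 0 R, Real.circleAverage f c r = f c) :
    ⨍ z in closedBall c R, f z = f c := by
  have radial_integral : ∫ r in Ioc 0 R, 2 * π * r = π * R ^ 2 := by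
    rw [← intervalIntegral.integral_of_le hR.le, intervalIntegral.integral_const_mul, integral_id]
    ring
  have ball_integral : ∫ z in closedBall c R, f z = (π * R ^ 2) • f c := by
    rw [setIntegral_closedBall_eq_integral_circleAverage hf, ← radial_integral,
      ← integral_smul_const]
    refine setIntegral_congr_fun measurableSet_Ioc fun r hr ↦ ?_
    simp only [hf_circle r hr]
  have ball_area : volume.real (closedBall c R) = π * R ^ 2 := by
    simp [measureReal_def, hR.le, mul_comm]
  rw [setAverage_eq, ball_integral, ball_area, inv_smul_smul₀ (by positivity)]

end

section

variable {ι E E' F : Type*} [Fintype ι] [NormedAddCommGroup E] [InnerProductSpace ℝ E]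
  [NormedAddCommGroup E'] [InnerProductSpace ℝ E']
  [NormedAddCommGroup F] [NormedSpace ℝ F]

lemma laplacian_eq_sum_fderiv_fderiv [FiniteDimensional ℝ E] (b : OrthonormalBasis ι ℝ E)
    {f : E → F} (hf : ContDiff ℝ 2 f) (x : E) :
    Δ f x = ∑ i, fderiv ℝ (fun y ↦ fderiv ℝ f y (b i)) x (b i) := by
  have hf' : Differentiable ℝ (fderiv ℝ f) :=
    (hf.fderiv_right (m := 1) le_rfl).differentiable one_ne_zero
  simp [laplacian_eq_iteratedFDeriv_orthonormalBasis f b,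
    iteratedFDeriv_two_apply, fderiv_clm_apply (hf' x) (differentiableAt_const _)]

lemma laplacian_comp_linearIsometryEquiv [FiniteDimensional ℝ E] [FiniteDimensional ℝ E']
    (e : E ≃ₗᵢ[ℝ] E') (f : E' → F) (x : E) : Δ (f ∘ e) x = Δ f (e x) := by
  let b := stdOrthonormalBasis ℝ E
  have iteratedFDeriv_comp : iteratedFDeriv ℝ 2 (f ∘ e) x =
      (iteratedFDeriv ℝ 2 f (e x)).compContinuousLinearMap fun _ ↦ e := by
    simpa only [iteratedFDerivWithin_univ, preimage_univ] using!
      e.toContinuousLinearEquiv.iteratedFDerivWithin_comp_right f uniqueDiffOn_univ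
        (mem_univ (e x)) 2
  rw [laplacian_eq_iteratedFDeriv_orthonormalBasis _ b,
    laplacian_eq_iteratedFDeriv_orthonormalBasis _ (b.map e)]
  refine Finset.sum_congr rfl fun i _ ↦ ?_
  rw [iteratedFDeriv_comp, ContinuousMultilinearMap.compContinuousLinearMap_apply]
  congr 1
  ext j
  fin_cases j <;> simp

lemma harmonicOnNhd_univ_of_sum_fderiv_fderiv_eq_zero [FiniteDimensional ℝ E]
    (b : OrthonormalBasis ι ℝ E) {f : E → F} (hf : ContDiff ℝ 2 f)
    (hΔ : ∀ x, ∑ i, fderiv ℝ (fun y ↦ fderiv ℝ f y (b i)) x (b i) = 0) :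
    HarmonicOnNhd f univ := fun _ _ ↦
  ⟨hf.contDiffAt, .of_forall fun y ↦ (laplacian_eq_sum_fderiv_fderiv b hf y).trans (hΔ y)⟩

lemma harmonicAt_comp_linearIsometryEquiv [FiniteDimensional ℝ E] [FiniteDimensional ℝ E']
    (e : E ≃ₗᵢ[ℝ] E') {f : E' → F} {x : E} (hf : HarmonicAt f (e x)) : HarmonicAt (f ∘ e) x := by
  refine ⟨hf.1.comp x e.toContinuousLinearEquiv.contDiff.contDiffAt, ?_⟩
  filter_upwards [e.continuous.continuousAt.eventually hf.2] with y hy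
  rw [laplacian_comp_linearIsometryEquiv, hy, Pi.zero_apply, Pi.zero_apply]

lemma hasBallMeanValueProperty_of_harmonicOnNhd_complex [CompleteSpace F] {f : ℂ → F}
    (hf : HarmonicOnNhd f univ) : HasBallMeanValueProperty volume f := fun _ _ hr ↦
  setAverage_closedBall_eq_of_circleAverage_eq hr (hf.continuousOn.mono (subset_univ _))
    fun _ _ ↦ (hf.mono (subset_univ _)).circleAverage_eq

lemma hasBallMeanValueProperty_of_harmonicOnNhd [FiniteDimensional ℝ E] [MeasurableSpace E]
    [BorelSpace E] [CompleteSpace F] (hE : Module.finrank ℝ E = 2) {f : E → F}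
    (hf : HarmonicOnNhd f univ) : HasBallMeanValueProperty volume f := by
  let e : ℂ ≃ₗᵢ[ℝ] E :=
    Complex.orthonormalBasisOneI.equiv (stdOrthonormalBasis ℝ E) (finCongr hE.symm)
  have hfe : HarmonicOnNhd (f ∘ e) univ := fun _ _ ↦
    harmonicAt_comp_linearIsometryEquiv e (hf _ (mem_univ _))
  exact .of_comp_isometryEquiv (e := e.toIsometryEquiv) e.measurePreserving
    (hasBallMeanValueProperty_of_harmonicOnNhd_complex hfe)

lemma opNorm_sq_le_sum_norm_sq_apply (b : OrthonormalBasis ι ℝ E) (L : E →L[ℝ] F) :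
    ‖L‖ ^ 2 ≤ ∑ i, ‖L (b i)‖ ^ 2 := by
  have sum_nonneg : 0 ≤ ∑ i, ‖L (b i)‖ ^ 2 := by positivity
  refine (Real.le_sqrt (norm_nonneg L) sum_nonneg).1
    (L.opNorm_le_bound (Real.sqrt_nonneg _) fun x ↦ ?_)
  calc ‖L x‖ = ‖∑ i, b.repr x i • L (b i)‖ := by
        conv_lhs => rw [← b.sum_repr x, map_sum]
        simp only [map_smul]
    _ ≤ ∑ i, ‖L (b i)‖ * ‖b.repr x i‖ :=
        norm_sum_le_of_le _ fun i _ ↦ by rw [norm_smul, mul_comm]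
    _ ≤ √(∑ i, ‖L (b i)‖ ^ 2) * √(∑ i, ‖b.repr x i‖ ^ 2) :=
        Real.sum_mul_le_sqrt_mul_sqrt _ _ _
    _ = √(∑ i, ‖L (b i)‖ ^ 2) * ‖x‖ := by
        rw [← EuclideanSpace.norm_eq, b.repr.norm_map]

lemma memLp_two_fderiv_of_lintegral_lt_top [FiniteDimensional ℝ E] [MeasurableSpace E]
    [BorelSpace E] {μ : Measure E} (b : OrthonormalBasis ι ℝ E) {f : E → F} (hf : ContDiff ℝ 1 f)
    (hfin : ∫⁻ x, ENNReal.ofReal (∑ i, ‖fderiv ℝ f x (b i)‖ ^ 2) ∂μ < ∞) :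
    MemLp (fderiv ℝ f) 2 μ := by
  refine ⟨(hf.continuous_fderiv one_ne_zero).aestronglyMeasurable, ?_⟩
  rw [eLpNorm_lt_top_iff_lintegral_rpow_enorm_lt_top two_ne_zero ENNReal.ofNat_ne_top]
  refine (lintegral_mono fun x ↦ ?_).trans_lt hfin
  rw [ENNReal.toReal_ofNat, ENNReal.rpow_ofNat, ← ofReal_norm,
    ← ENNReal.ofReal_pow (norm_nonneg _)]
  exact ENNReal.ofReal_le_ofReal (opNorm_sq_le_sum_norm_sq_apply b _)

theorem stmt_4_general [FiniteDimensional ℝ E] [MeasurableSpace E] [BorelSpace E]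
    (hE : Module.finrank ℝ E = 2) {f : E → F} (hf : HarmonicOnNhd f univ)
    {p : ℝ≥0∞} (hfp : MemLp (fderiv ℝ f) p volume) (hp : 1 ≤ p) (hp_top : p ≠ ∞) (x y : E) :
    f x = f y := by
  have : Nontrivial E := Module.nontrivial_of_finrank_pos (R := ℝ) (by lia)
  have hf_smooth : ContDiff ℝ 1 f := (contDiffOn_univ.1 hf.contDiffOn).of_le one_le_two
  -- Averages in `F` are junk unless `F` is complete, so we test against continuous functionals.
  refine (SeparatingDual.eq_iff_forall_dual_eq (R := ℝ)).2 fun g ↦ ?_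
  have fderiv_comp : fderiv ℝ (g ∘ f) = ContinuousLinearMap.compL ℝ E F ℝ g ∘ fderiv ℝ f :=
    funext fun z ↦ g.hasFDerivAt.comp z (hf_smooth.differentiable one_ne_zero z).hasFDerivAt
      |>.fderiv
  exact (hasBallMeanValueProperty_of_harmonicOnNhd hE (hf.comp_CLM g))
    |>.apply_eq_apply_of_memLp_fderiv (g.contDiff.comp hf_smooth)
      (fderiv_comp ▸ ContinuousLinearMap.comp_memLp' _ hfp) hp hp_top x y

end

end

/-- Liouville theorem: a `C²` harmonic map `f : ℝ² → ℝ^m` with finite Dirichlet energy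
is constant. Here `∂_i f x = fderiv ℝ f x (e_i)` with `e_i` the standard basis of `ℝ²`. -/
theorem stmt_4 (m : ℕ) (hm : 1 ≤ m)
    (f : EuclideanSpace ℝ (Fin 2) → EuclideanSpace ℝ (Fin m))
    (hf : ContDiff ℝ 2 f)
    (hharm : ∀ x, (∑ i : Fin 2,
        fderiv ℝ (fun y => fderiv ℝ f y (EuclideanSpace.single i (1 : ℝ))) x
          (EuclideanSpace.single i (1 : ℝ))) = 0)
    (henergy : (∫⁻ x : EuclideanSpace ℝ (Fin 2), ENNReal.ofReal
        (∑ i : Fin 2, ∑ j : Fin m,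
          (fderiv ℝ f x (EuclideanSpace.single i (1 : ℝ)) j) ^ 2)) < ⊤) :
    ∀ x y, f x = f y := by
  simp only [← EuclideanSpace.basisFun_apply] at hharm henergy
  simp only [← EuclideanSpace.real_norm_sq_eq] at henergy
  exact stmt_4_general finrank_euclideanSpace_fin
    (harmonicOnNhd_univ_of_sum_fderiv_fderiv_eq_zero _ hf hharm)
    (memLp_two_fderiv_of_lintegral_lt_top _ (hf.of_le one_le_two) henergy)
    one_le_two ENNReal.ofNat_ne_top
end
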